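/- Let L be a finite index set, let a_l, b_l ∈ ℝ for l ∈ L, and let δ_r, δ_s ∈ ℝ. Then min( Σ_{l∈L} (b_l − min(a_l, b_l)) + δ_r , Σ_{l∈L} (a_l − min(a_l, b_l)) + δ_s ) ≥ min(δ_r, δ_s). Consequently, for any β ∈ ℝ, the omission of coverage progress after one weight-sharing step, δ_new := min( β − Σ_l a_l + δ_r , β − Σ_l b_l + δ_s ) − ( β − Σ_l max(a_l, b_l) ), satisfies δ_new ≥ min(δ_r, δ_s); in particular, if δ_r ≥ 0 and δ_s ≥ 0 then δ_new ≥ 0. (Key inequality in the proof of Proposition 3: the omission of the coverage progress is always nonnegative.) -/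

import Mathlib

/-- Key inequality in the proof of Proposition 3: the omission of coverage progress
after one weight-sharing step is at least `min(δ_r, δ_s)`, hence nonnegative whenever
`δ_r, δ_s ≥ 0`. -/
theorem stmt12 {ι : Type} (L : Finset ι) (a b : ι → ℝ) (δr δs : ℝ) :
    (min (∑ l ∈ L, (b l - min (a l) (b l)) + δr)
        (∑ l ∈ L, (a l - min (a l) (b l)) + δs) ≥ min δr δs) ∧
    ∀ β : ℝ,
      (min (β - ∑ l ∈ L, a l + δr) (β - ∑ l ∈ L, b l + δs)
          - (β - ∑ l ∈ L, max (a l) (b l)) ≥ min δr δs) ∧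
      (0 ≤ δr → 0 ≤ δs →
        0 ≤ min (β - ∑ l ∈ L, a l + δr) (β - ∑ l ∈ L, b l + δs)
          - (β - ∑ l ∈ L, max (a l) (b l))) := by
  have h1 : 0 ≤ ∑ l ∈ L, (b l - min (a l) (b l)) :=
    Finset.sum_nonneg fun l _ => sub_nonneg.2 (min_le_right _ _)
  have h2 : 0 ≤ ∑ l ∈ L, (a l - min (a l) (b l)) :=
    Finset.sum_nonneg fun l _ => sub_nonneg.2 (min_le_left _ _)
  have h3 : ∑ l ∈ L, a l ≤ ∑ l ∈ L, max (a l) (b l) :=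
    Finset.sum_le_sum fun l _ => le_max_left _ _
  have h4 : ∑ l ∈ L, b l ≤ ∑ l ∈ L, max (a l) (b l) :=
    Finset.sum_le_sum fun l _ => le_max_right _ _
  have hr := min_le_left δr δs
  have hs := min_le_right δr δs
  have key : ∀ β : ℝ, min δr δs ≤
      min (β - ∑ l ∈ L, a l + δr) (β - ∑ l ∈ L, b l + δs)
        - (β - ∑ l ∈ L, max (a l) (b l)) := by
    intro β
    rw [le_sub_iff_add_le]
    exact le_min (by linarith) (by linarith)
  exact ⟨le_min (by linarith) (by linarith), fun β =>
    ⟨key β, fun h h' => (le_min h h').trans (key β)⟩⟩
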